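/- Let X be a set and S : X × X → X × X a bijection satisfying the braid equation, and let n ≥ 2. For each pair of distinct indices i, j ∈ {1, …, n} let S_{ij} : Xⁿ → Xⁿ be the bijection applying S to the coordinates in positions (i, j) (in that order) and the identity elsewhere. Then the assignment x_{ij} ↦ S_{ij} defines a group homomorphism φₙ^S : Hₙ → Sym(Xⁿ); equivalently, the permutations S_{ij} satisfy S_{ij} ∘ S_{kl} = S_{kl} ∘ S_{ij} whenever i, j, k, l are pairwise distinct, and S_{ik} ∘ S_{kj} ∘ S_{ik} = S_{kj} ∘ S_{ik} ∘ S_{kj} for pairwise distinct i, j, k. -/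

import Mathlib

/-- Lift of a map on the factors (1,2) of a triple product. -/
def lift12 {X Y Z : Type*} (T : X × Y → X × Y) : X × Y × Z → X × Y × Z :=
  fun (x, y, z) => ((T (x, y)).1, (T (x, y)).2, z)

/-- Lift of a map on the factors (2,3) of a triple product. -/
def lift23 {X Y Z : Type*} (T : Y × Z → Y × Z) : X × Y × Z → X × Y × Z :=
  fun (x, y, z) => (x, (T (y, z)).1, (T (y, z)).2)

/-- `S` satisfies the braid equation. -/
def IsBraid {X : Type*} (S : X × X → X × X) : Prop :=
  lift12 (X := X) (Y := X) (Z := X) S ∘ lift23 S ∘ lift12 S =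
    lift23 (X := X) (Y := X) (Z := X) S ∘ lift12 S ∘ lift23 S

/-- `act S i j` applies `S` to the coordinates in positions `(i, j)` (in that order)
and the identity to all other coordinates of `Xⁿ`. -/
def act {X : Type*} {n : ℕ} (S : X × X → X × X) (i j : Fin n) (f : Fin n → X) :
    Fin n → X :=
  Function.update (Function.update f i (S (f i, f j)).1) j (S (f i, f j)).2

/-!
Only the coordinates `i`, `j`, `k` take part in the braid relation. Fix all other coordinates of a
family and let these three vary: this embeds `X i × X j × X k` into the product of the family, and
the embedding intertwines `T₁₂` with `T_{ij}` and `T₂₃` with `T_{jk}`. Every family lies in the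
image of the embedding built from it, so the braid equation on the triple product suffices.
-/

section Coordinates

open Function

variable {ι : Type*} [DecidableEq ι] {X : ι → Type*}

/-- The map `T_{ij}` on a product `∏ a, X a` over an arbitrary index type: `T` is applied to the
coordinates `(i, j)`, in that order, and the identity to the others. For `i = j` the second
component of `T` wins. -/
def applyAt (i j : ι) (T : X i × X j → X i × X j) (f : ∀ a, X a) : ∀ a, X a :=
  update (update f i (T (f i, f j)).1) j (T (f i, f j)).2

/-- The map `X i × X j × X k → ∏ a, X a` that fills the coordinates other than `i`, `j`, `k` from
`f`, an embedding for distinct `i`, `j`, `k`. It transports identities on a triple product to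
`∏ a, X a`. -/
def updateTriple (f : ∀ a, X a) (i j k : ι) (p : X i × X j × X k) : ∀ a, X a :=
  update (update (update f i p.1) j p.2.1) k p.2.2

theorem applyAt_comp_comm {i j k l : ι} (hik : i ≠ k) (hil : i ≠ l) (hjk : j ≠ k) (hjl : j ≠ l)
    (S : X i × X j → X i × X j) (T : X k × X l → X k × X l) :
    applyAt i j S ∘ applyAt k l T = applyAt k l T ∘ applyAt i j S := by
  funext f
  simp only [comp_apply, applyAt, update_of_ne, hik, hil, hjk, hjl, hik.symm, hil.symm, hjk.symm,
    hjl.symm, ne_eq, not_false_eq_true]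
  rw [update_comm hil.symm, update_comm hik.symm, update_comm hjl.symm, update_comm hjk.symm]

theorem updateTriple_self (f : ∀ a, X a) (i j k : ι) :
    updateTriple f i j k (f i, f j, f k) = f := by
  simp only [updateTriple, update_eq_self]

theorem semiconj_updateTriple_lift12 {i j k : ι} (hij : i ≠ j) (hik : i ≠ k) (hjk : j ≠ k)
    (T : X i × X j → X i × X j) (f : ∀ a, X a) :
    Semiconj (updateTriple f i j k) (lift12 T) (applyAt i j T) := by
  rintro ⟨x, y, z⟩
  simp only [updateTriple, lift12, applyAt, update_self, update_of_ne, hij, hik, hjk, ne_eq,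
    not_false_eq_true]
  rw [update_comm hik.symm, update_comm hij.symm, update_idem, update_comm hjk.symm, update_idem]

theorem semiconj_updateTriple_lift23 {i j k : ι} (hjk : j ≠ k)
    (T : X j × X k → X j × X k) (f : ∀ a, X a) :
    Semiconj (updateTriple f i j k) (lift23 T) (applyAt j k T) := by
  rintro ⟨x, y, z⟩
  simp only [updateTriple, lift23, applyAt, update_self, update_of_ne, hjk, ne_eq,
    not_false_eq_true]
  rw [update_comm hjk.symm, update_idem, update_idem]

theorem applyAt_braid {i j k : ι} (hij : i ≠ j) (hik : i ≠ k) (hjk : j ≠ k)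
    {S : X i × X j → X i × X j} {T : X j × X k → X j × X k}
    (hST : lift12 S ∘ lift23 T ∘ lift12 S = lift23 T ∘ lift12 S ∘ lift23 T) :
    applyAt i j S ∘ applyAt j k T ∘ applyAt i j S =
      applyAt j k T ∘ applyAt i j S ∘ applyAt j k T := by
  funext f
  have hS := semiconj_updateTriple_lift12 hij hik hjk S f
  have hT := semiconj_updateTriple_lift23 (i := i) hjk T f
  have hSTS := hS.comp_right (hT.comp_right hS) (f i, f j, f k)
  have hTST := hT.comp_right (hS.comp_right hT) (f i, f j, f k)
  rw [updateTriple_self] at hSTS hTST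
  rw [← hSTS, ← hTST, hST]

end Coordinates

theorem hn_representation_general {ι : Type*} [DecidableEq ι] {X : ι → Type*}
    (S : ∀ i j, X i × X j → X i × X j)
    (hS : ∀ i j k : ι, i ≠ j → i ≠ k → j ≠ k →
      lift12 (S i j) ∘ lift23 (S j k) ∘ lift12 (S i j) =
        lift23 (S j k) ∘ lift12 (S i j) ∘ lift23 (S j k)) :
    (∀ i j k l : ι, i ≠ k → i ≠ l → j ≠ k → j ≠ l →
      applyAt i j (S i j) ∘ applyAt k l (S k l) = applyAt k l (S k l) ∘ applyAt i j (S i j)) ∧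
    (∀ i j k : ι, i ≠ j → i ≠ k → j ≠ k →
      applyAt i k (S i k) ∘ applyAt k j (S k j) ∘ applyAt i k (S i k) =
        applyAt k j (S k j) ∘ applyAt i k (S i k) ∘ applyAt k j (S k j)) :=
  ⟨fun i j k l hik hil hjk hjl => applyAt_comp_comm hik hil hjk hjl (S i j) (S k l),
    fun i j k hij hik hjk => applyAt_braid hik hij hjk.symm (hS i k j hik hij hjk.symm)⟩

theorem act_eq_applyAt {X : Type*} {n : ℕ} (S : X × X → X × X) (i j : Fin n) :
    act S i j = applyAt (X := fun _ => X) i j S :=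
  rfl

/-- If `S : X × X → X × X` is a bijection satisfying the braid equation and `n ≥ 2`,
then the maps `S_{ij} : Xⁿ → Xⁿ` satisfy the defining relations of the group `Hₙ`:
`S_{ij} ∘ S_{kl} = S_{kl} ∘ S_{ij}` for pairwise distinct `i, j, k, l`, and
`S_{ik} ∘ S_{kj} ∘ S_{ik} = S_{kj} ∘ S_{ik} ∘ S_{kj}` for pairwise distinct `i, j, k`;
hence `x_{ij} ↦ S_{ij}` defines a group homomorphism `Hₙ → Sym(Xⁿ)`. -/
theorem hn_representation {X : Type*} (n : ℕ) (hn : 2 ≤ n) (S : X × X → X × X)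
    (hbij : Function.Bijective S) (hBr : IsBraid S) :
    (∀ i j k l : Fin n, i ≠ j → i ≠ k → i ≠ l → j ≠ k → j ≠ l → k ≠ l →
      act S i j ∘ act S k l = act S k l ∘ act S i j) ∧
    (∀ i j k : Fin n, i ≠ j → i ≠ k → j ≠ k →
      act S i k ∘ act S k j ∘ act S i k = act S k j ∘ act S i k ∘ act S k j) := by
  simp only [act_eq_applyAt]
  obtain ⟨hcomm, hbraid⟩ := hn_representation_general (ι := Fin n) (X := fun _ => X)
    (fun _ _ => S) fun _ _ _ _ _ _ => hBr
  exact ⟨fun i j k l _ hik hil hjk hjl _ => hcomm i j k l hik hil hjk hjl, hbraid⟩
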